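/- Let m, n be integers with m + n odd, and let M = [[0,1,n+1],[1,0,m],[0,2,2n+1]] (a perfect Hessenberg matrix in SL(3,ℤ) of Hessenberg type ⟨0,1|1,0,2⟩ and Hessenberg complexity 2). Then M is ς-reduced; equivalently, every perfect Hessenberg matrix integer conjugate to M has Hessenberg complexity at least 2. -/

import Mathlib

/-- 3×3 integer matrices. -/
abbrev M3 : Type := Matrix (Fin 3) (Fin 3) ℤ

/-- Hessenberg complexity ς(M) = a21² · a32. -/
def HessComplexity (M : M3) : ℤ := (M 1 0) ^ 2 * (M 2 1)

/-- A perfect (upper) Hessenberg matrix: a31 = 0, 0 ≤ a11 < a21, 0 ≤ a12 < a32,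
0 ≤ a22 < a32. -/
def IsPerfectHessenberg (M : M3) : Prop :=
  M 2 0 = 0 ∧
  0 ≤ M 0 0 ∧ M 0 0 < M 1 0 ∧
  0 ≤ M 0 1 ∧ M 0 1 < M 2 1 ∧
  0 ≤ M 1 1 ∧ M 1 1 < M 2 1

/-- M₂ = X · M₁ · X⁻¹ for some X ∈ GL(3,ℤ). -/
def IntegerConjugate (M₁ M₂ : M3) : Prop :=
  ∃ X : M3, (X.det = 1 ∨ X.det = -1) ∧ M₂ = X * M₁ * X⁻¹

/-- A ς-reduced matrix: a perfect Hessenberg SL(3,ℤ)-matrix whose Hessenberg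
complexity is minimal in its integer conjugacy class. -/
def SigmaReduced (M : M3) : Prop :=
  M.det = 1 ∧ IsPerfectHessenberg M ∧
  ∀ M' : M3, M'.det = 1 → IsPerfectHessenberg M' → IntegerConjugate M M' →
    HessComplexity M ≤ HessComplexity M'

/-- The family H(m,n) of matrices of Hessenberg type ⟨a11,a21|a12,a22,a32⟩. -/
def Hmat (a11 a12 a13 a21 a22 a23 a32 a33 m n : ℤ) : M3 :=
  !![a11, a12, a11 * m + a12 * n + a13;
     a21, a22, a21 * m + a22 * n + a23;
     0,   a32, a32 * n + a33]

/-!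
Conjugation preserves the property that the square is the identity modulo `d`. For a Hessenberg
matrix `A` the entry of `A ^ 2` in position `(3,1)` is `a32 * a21`, so this property forces
`d ∣ a32 * a21`; for a perfect Hessenberg matrix this product is positive and at most `ς(A)`,
whence `d ≤ ς(A)`. When `m + n` is odd, the given matrix, of complexity `2`, is an involution
modulo `2`.
-/

theorem IntegerConjugate.isConj {A B : M3} (h : IntegerConjugate A B) : IsConj A B := by
  obtain ⟨X, hdet, rfl⟩ := h
  have hX : IsUnit X.det := Int.isUnit_iff.mpr hdet
  exact ⟨X.nonsingInvUnit hX, (X.nonsing_inv_mul_cancel_right (X * A) hX).symm⟩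

theorem pow_eq_one_of_isConj {G : Type*} [Monoid G] {a b : G} {k : ℕ} (h : IsConj a b)
    (ha : a ^ k = 1) : b ^ k = 1 :=
  isConj_one_right.mp (ha ▸ h.pow k)

theorem mul_apply_two_zero {R : Type*} [NonUnitalNonAssocSemiring R]
    {A B : Matrix (Fin 3) (Fin 3) R} (hA : A 2 0 = 0) (hB : B 2 0 = 0) :
    (A * B) 2 0 = A 2 1 * B 1 0 := by
  simp [Matrix.mul_apply, Fin.sum_univ_three, hA, hB]

theorem dvd_subdiag_mul_of_mapMatrix_sq_eq_one {d : ℕ} {A : M3} (hA : A 2 0 = 0)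
    (hsq : (Int.castRingHom (ZMod d)).mapMatrix A ^ 2 = 1) : (d : ℤ) ∣ A 2 1 * A 1 0 := by
  rw [← ZMod.intCast_zmod_eq_zero_iff_dvd, ← mul_apply_two_zero hA hA]
  rw [← map_pow, pow_two] at hsq
  simpa using congrFun₂ hsq 2 0

namespace IsPerfectHessenberg

variable {A : M3}

theorem subdiag_mul_pos (hA : IsPerfectHessenberg A) : 0 < A 2 1 * A 1 0 := by
  obtain ⟨-, h00, h10, h01, h21, -, -⟩ := hA
  exact mul_pos (h01.trans_lt h21) (h00.trans_lt h10)

theorem subdiag_mul_le_hessComplexity (hA : IsPerfectHessenberg A) :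
    A 2 1 * A 1 0 ≤ HessComplexity A := by
  obtain ⟨-, -, -, h01, h21, -, -⟩ := hA
  calc A 2 1 * A 1 0 ≤ A 2 1 * A 1 0 ^ 2 :=
        mul_le_mul_of_nonneg_left (Int.le_self_sq _) (h01.trans h21.le)
    _ = HessComplexity A := mul_comm _ _

theorem le_hessComplexity_of_mapMatrix_sq_eq_one {d : ℕ} (hA : IsPerfectHessenberg A)
    (hsq : (Int.castRingHom (ZMod d)).mapMatrix A ^ 2 = 1) : (d : ℤ) ≤ HessComplexity A :=
  calc (d : ℤ) ≤ A 2 1 * A 1 0 :=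
        Int.le_of_dvd hA.subdiag_mul_pos (dvd_subdiag_mul_of_mapMatrix_sq_eq_one hA.1 hsq)
    _ ≤ HessComplexity A := hA.subdiag_mul_le_hessComplexity

theorem sigmaReduced_of_mapMatrix_sq_eq_one {d : ℕ} (hA : IsPerfectHessenberg A)
    (hdet : A.det = 1) (hd : HessComplexity A ≤ d)
    (hsq : (Int.castRingHom (ZMod d)).mapMatrix A ^ 2 = 1) : SigmaReduced A := by
  refine ⟨hdet, hA, fun B _ hB hAB => hd.trans ?_⟩
  have hconj : IsConj ((Int.castRingHom (ZMod d)).mapMatrix A)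
      ((Int.castRingHom (ZMod d)).mapMatrix B) :=
    MonoidHom.map_isConj (Int.castRingHom (ZMod d)).mapMatrix.toMonoidHom hAB.isConj
  exact hB.le_hessComplexity_of_mapMatrix_sq_eq_one (pow_eq_one_of_isConj hconj hsq)

end IsPerfectHessenberg

-- In homogeneous coordinates the matrix is the affine map `(x, y) ↦ (y + a, x + a)`.
theorem affine_swap_sq_eq_one {R : Type*} [Semiring R] [CharP R 2] (a : R) :
    (!![0, 1, a; 1, 0, a; 0, 0, 1] : Matrix (Fin 3) (Fin 3) R) ^ 2 = 1 := by
  ext i j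
  fin_cases i <;> fin_cases j <;> simp [pow_two, CharTwo.add_self_eq_zero]

theorem mapMatrix_zmod_two_eq_affine_swap {m n : ℤ} (hodd : Odd (m + n)) :
    (Int.castRingHom (ZMod 2)).mapMatrix !![0, 1, n + 1; 1, 0, m; 0, 2, 2 * n + 1] =
      !![0, 1, (m : ZMod 2); 1, 0, (m : ZMod 2); 0, 0, 1] := by
  have hsum : (m + n : ZMod 2) = 1 := mod_cast hodd.intCast_zmod_two
  have hm : (n + 1 : ZMod 2) = m := by
    rw [CharTwo.add_eq_iff_eq_add.mp hsum, add_comm]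
  have htwo : (2 : ZMod 2) = 0 := CharTwo.two_eq_zero
  ext i j
  fin_cases i <;> fin_cases j <;> simp [hm, htwo]

/-- For m + n odd, the perfect Hessenberg matrix [[0,1,n+1],[1,0,m],[0,2,2n+1]]
of Hessenberg type ⟨0,1|1,0,2⟩ is ς-reduced. -/
theorem sigma_reduced_of_odd_sum (m n : ℤ) (hodd : Odd (m + n)) :
    SigmaReduced (!![0, 1, n + 1; 1, 0, m; 0, 2, 2 * n + 1] : M3) := by
  have hperfect : IsPerfectHessenberg !![0, 1, n + 1; 1, 0, m; 0, 2, 2 * n + 1] := by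
    simp [IsPerfectHessenberg]
  have hdet : (!![0, 1, n + 1; 1, 0, m; 0, 2, 2 * n + 1] : M3).det = 1 := by
    rw [Matrix.det_fin_three]
    simp only [Matrix.of_apply, Matrix.cons_val]
    ring
  refine hperfect.sigmaReduced_of_mapMatrix_sq_eq_one (d := 2) hdet ?complexity ?involution
  case complexity => simp [HessComplexity]
  case involution => rw [mapMatrix_zmod_two_eq_affine_swap hodd, affine_swap_sq_eq_one]
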